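/- Let X be a δ-hyperbolic geodesic space and Y a geodesic metric space. If M ≥ M₁(δ,λ,c) and q : Y → X is an (M,λ,c)-local-quasi-isometric embedding (its restriction to every ball of radius M is a (λ,c)-quasi-isometric embedding), then q is a (λ',c')-quasi-isometric embedding globally, where λ', c' depend only on δ, λ, c. -/

import Mathlib

open Set

/-- `s` is (the image of) a geodesic segment from `x` to `y`. -/
def IsGeodesicSegment {X : Type} [MetricSpace X] (x y : X) (s : Set X) : Prop :=
  ∃ γ : ℝ → X, γ 0 = x ∧ γ (dist x y) = y ∧
    (∀ t ∈ Icc (0:ℝ) (dist x y), ∀ t' ∈ Icc (0:ℝ) (dist x y),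
      dist (γ t) (γ t') = |t - t'|) ∧
    s = γ '' Icc 0 (dist x y)

/-- A geodesic metric space: any two points are joined by a geodesic segment. -/
def GeodesicSpace (X : Type) [MetricSpace X] : Prop :=
  ∀ x y : X, ∃ s, IsGeodesicSegment x y s

/-- `δ`-hyperbolicity (thin triangles): a geodesic space in which each side of every
geodesic triangle lies in the `δ`-neighborhood of the union of the other two sides. -/
def DeltaHyperbolic (X : Type) [MetricSpace X] (δ : ℝ) : Prop :=
  GeodesicSpace X ∧
  ∀ (x y z : X) (s₁ s₂ s₃ : Set X),
    IsGeodesicSegment x y s₁ → IsGeodesicSegment y z s₂ → IsGeodesicSegment z x s₃ →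
    ∀ p ∈ s₁, ∃ q ∈ s₂ ∪ s₃, dist p q ≤ δ

/-- `q` is a `(λ,c)`-quasi-geodesic on the set `I ⊆ ℝ`. -/
def QuasiGeodesicOn {X : Type} [MetricSpace X] (q : ℝ → X) (I : Set ℝ) (lam c : ℝ) : Prop :=
  ∀ t ∈ I, ∀ t' ∈ I,
    lam⁻¹ * |t - t'| - c ≤ dist (q t) (q t') ∧ dist (q t) (q t') ≤ lam * |t - t'| + c

/-- `q` is an `(M,λ,c)`-local-quasi-geodesic on `I`: its restriction to every
subinterval of length at most `M` is a `(λ,c)`-quasi-geodesic. -/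
def LocalQuasiGeodesicOn {X : Type} [MetricSpace X] (q : ℝ → X) (I : Set ℝ)
    (M lam c : ℝ) : Prop :=
  ∀ a b : ℝ, a ∈ I → b ∈ I → a ≤ b → b - a ≤ M →
    QuasiGeodesicOn q (I ∩ Icc a b) lam c

/-- `q : Y → X` is a `(λ,c)`-quasi-isometric embedding. -/
def QIEmbedding {Y X : Type} [MetricSpace Y] [MetricSpace X] (q : Y → X)
    (lam c : ℝ) : Prop :=
  ∀ y₁ y₂ : Y,
    lam⁻¹ * dist y₁ y₂ - c ≤ dist (q y₁) (q y₂) ∧ dist (q y₁) (q y₂) ≤ lam * dist y₁ y₂ + c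

theorem IsGeodesicSegment.left_mem {X : Type} [MetricSpace X] {x y : X} {s : Set X}
    (h : IsGeodesicSegment x y s) : x ∈ s := by
  obtain ⟨γ, h0, -, -, rfl⟩ := h
  exact ⟨0, ⟨le_rfl, dist_nonneg⟩, h0⟩

theorem IsGeodesicSegment.right_mem {X : Type} [MetricSpace X] {x y : X} {s : Set X}
    (h : IsGeodesicSegment x y s) : y ∈ s := by
  obtain ⟨γ, -, h1, -, rfl⟩ := h
  exact ⟨dist x y, ⟨dist_nonneg, le_rfl⟩, h1⟩

theorem IsGeodesicSegment.dist_add_dist {X : Type} [MetricSpace X] {x y p : X} {s : Set X}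
    (h : IsGeodesicSegment x y s) (hp : p ∈ s) : dist x p + dist p y = dist x y := by
  obtain ⟨γ, h0, h1, hγ, rfl⟩ := h
  obtain ⟨t, ht, rfl⟩ := hp
  have e0 := hγ 0 ⟨le_rfl, dist_nonneg⟩ t ht
  have e1 := hγ t ht _ ⟨dist_nonneg, le_rfl⟩
  rw [h0, zero_sub, abs_neg, abs_of_nonneg ht.1] at e0
  rw [h1, abs_sub_comm, abs_of_nonneg (sub_nonneg.2 ht.2)] at e1
  rw [e0, e1]
  ring

theorem IsGeodesicSegment.isPreconnected {X : Type} [MetricSpace X] {x y : X} {s : Set X}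
    (h : IsGeodesicSegment x y s) : IsPreconnected s := by
  obtain ⟨γ, -, -, hγ, rfl⟩ := h
  refine isPreconnected_Icc.image _ ?_
  have hL : LipschitzOnWith 1 γ (Icc 0 (dist x y)) :=
    LipschitzOnWith.of_dist_le_mul fun t ht t' ht' => by
      rw [hγ t ht t' ht', Real.dist_eq]
      simp
  exact hL.continuousOn

theorem IsGeodesicSegment.symm {X : Type} [MetricSpace X] {x y : X} {s : Set X}
    (h : IsGeodesicSegment x y s) : IsGeodesicSegment y x s := by
  obtain ⟨γ, h0, h1, hγ, rfl⟩ := h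
  have hmem : ∀ t ∈ Icc (0 : ℝ) (dist x y), dist x y - t ∈ Icc (0 : ℝ) (dist x y) :=
    fun t ht => ⟨by linarith [ht.2], by linarith [ht.1]⟩
  refine ⟨fun t => γ (dist x y - t), by simpa using h1, by simpa [dist_comm y x] using h0, ?_, ?_⟩
  · rw [dist_comm y x]
    intro t ht t' ht'
    rw [hγ _ (hmem t ht) _ (hmem t' ht'), abs_sub_comm]
    congr 1
    ring
  · rw [dist_comm y x]
    ext p
    constructor
    · rintro ⟨t, ht, rfl⟩
      exact ⟨dist x y - t, hmem t ht, by simp⟩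
    · rintro ⟨t, ht, rfl⟩
      exact ⟨dist x y - t, hmem t ht, rfl⟩

/-- If a preconnected set is covered by the `D`-neighborhoods of `S` and `T` and meets both of
them, then one of its points is close to both `S` and `T`. -/
theorem IsPreconnected.exists_dist_le_of_cover {X : Type} [MetricSpace X] {s S T : Set X}
    {D : ℝ} (hs : IsPreconnected s) (hcover : ∀ p ∈ s, ∃ u ∈ S ∪ T, dist p u ≤ D)
    (hS : ∃ p ∈ s, ∃ u ∈ S, dist p u ≤ D) (hT : ∃ p ∈ s, ∃ u ∈ T, dist p u ≤ D) :
    ∃ p ∈ s, (∃ u ∈ S, dist p u ≤ D + 1) ∧ ∃ v ∈ T, dist p v ≤ D + 1 := by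
  have hclosed : ∀ U : Set X, IsClosed {p | Metric.infDist p U ≤ D} := fun U =>
    isClosed_le (Metric.continuous_infDist_pt U) continuous_const
  have hinf : ∀ {U : Set X} {p u : X}, u ∈ U → dist p u ≤ D → Metric.infDist p U ≤ D :=
    fun hu h => (Metric.infDist_le_dist_of_mem hu).trans h
  have hnear : ∀ {U : Set X} {p : X}, U.Nonempty → Metric.infDist p U ≤ D →
      ∃ u ∈ U, dist p u ≤ D + 1 := fun hU h => by
    obtain ⟨u, hu, hlt⟩ := (Metric.infDist_lt_iff hU).1 (lt_of_le_of_lt h (lt_add_one D))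
    exact ⟨u, hu, hlt.le⟩
  obtain ⟨p₀, hp₀, u₀, hu₀, h₀⟩ := hS
  obtain ⟨p₁, hp₁, u₁, hu₁, h₁⟩ := hT
  obtain ⟨p, hp, hpS, hpT⟩ := isPreconnected_closed_iff.1 hs _ _ (hclosed S) (hclosed T)
    (fun p hp => by
      obtain ⟨u, hu | hu, h⟩ := hcover p hp
      · exact Or.inl (hinf hu h)
      · exact Or.inr (hinf hu h))
    ⟨p₀, hp₀, hinf hu₀ h₀⟩ ⟨p₁, hp₁, hinf hu₁ h₁⟩
  exact ⟨p, hp, hnear ⟨u₀, hu₀⟩ hpS, hnear ⟨u₁, hu₁⟩ hpT⟩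

/-- Twice the Gromov product of `x` and `y` based at `w`. -/
def twiceGromovProduct {X : Type} [MetricSpace X] (x y w : X) : ℝ :=
  dist x w + dist y w - dist x y

theorem twiceGromovProduct_le_of_mem {X : Type} [MetricSpace X] {x y p w : X} {s : Set X}
    (h : IsGeodesicSegment x y s) (hp : p ∈ s) : twiceGromovProduct x y w ≤ 2 * dist p w := by
  have h₀ := h.dist_add_dist hp
  have h₁ := dist_triangle x p w
  have h₂ := dist_triangle y p w
  rw [dist_comm y p] at h₂
  unfold twiceGromovProduct
  linarith

theorem DeltaHyperbolic.exists_dist_le_twiceGromovProduct {X : Type} [MetricSpace X] {δ : ℝ}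
    (hX : DeltaHyperbolic X δ) (hδ : 0 ≤ δ) {x y : X} (w : X) {s : Set X}
    (h : IsGeodesicSegment x y s) :
    ∃ p ∈ s, 2 * dist p w ≤ twiceGromovProduct x y w + 4 * (δ + 1) := by
  obtain ⟨S, hS⟩ := hX.1 x w
  obtain ⟨T, hT⟩ := hX.1 y w
  obtain ⟨p, hp, ⟨u, hu, hpu⟩, v, hv, hpv⟩ :=
    h.isPreconnected.exists_dist_le_of_cover (S := S) (T := T) (D := δ)
      (fun p hp => by
        rw [Set.union_comm]
        exact hX.2 x y w s T S h hT hS.symm p hp)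
      ⟨x, h.left_mem, x, hS.left_mem, by simpa using hδ⟩
      ⟨y, h.right_mem, y, hT.left_mem, by simpa using hδ⟩
  refine ⟨p, hp, ?_⟩
  have h₁ := h.dist_add_dist hp
  have h₂ := hS.dist_add_dist hu
  have h₃ := hT.dist_add_dist hv
  have h₄ := dist_triangle x u p
  have h₅ := dist_triangle y v p
  have h₆ := dist_triangle p u w
  have h₇ := dist_triangle p v w
  rw [dist_comm u p] at h₄
  rw [dist_comm v p, dist_comm y p] at h₅
  unfold twiceGromovProduct
  linarith

/-- Gromov's four-point inequality. -/
theorem DeltaHyperbolic.four_point {X : Type} [MetricSpace X] {δ : ℝ}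
    (hX : DeltaHyperbolic X δ) (hδ : 0 ≤ δ) (x y z w : X) :
    twiceGromovProduct x y w ≤ twiceGromovProduct x z w + (6 * δ + 4) ∨
      twiceGromovProduct y z w ≤ twiceGromovProduct x z w + (6 * δ + 4) := by
  obtain ⟨s, hs⟩ := hX.1 x z
  obtain ⟨S, hS⟩ := hX.1 x y
  obtain ⟨T, hT⟩ := hX.1 y z
  obtain ⟨p, hp, hpw⟩ := hX.exists_dist_le_twiceGromovProduct hδ w hs
  obtain ⟨u, hu, hpu⟩ := hX.2 x z y s T S hs hT.symm hS.symm p hp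
  have h₁ := dist_triangle u p w
  rw [dist_comm u p] at h₁
  rcases hu with hu | hu
  · right
    linarith [twiceGromovProduct_le_of_mem (w := w) hT hu]
  · left
    linarith [twiceGromovProduct_le_of_mem (w := w) hS hu]

/-- A geodesic stays logarithmically close to any discrete path with the same endpoints. -/
theorem DeltaHyperbolic.exists_dist_le_of_discrete_path {X : Type} [MetricSpace X] {δ S : ℝ}
    (hX : DeltaHyperbolic X δ) (p : ℕ → X) (k a : ℕ)
    (hstep : ∀ i, a ≤ i → i < a + 2 ^ k → dist (p i) (p (i + 1)) ≤ S)
    {s : Set X} (hs : IsGeodesicSegment (p a) (p (a + 2 ^ k)) s) {z : X} (hz : z ∈ s) :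
    ∃ i, a ≤ i ∧ i ≤ a + 2 ^ k ∧ dist z (p i) ≤ k * δ + S := by
  induction k generalizing a s z with
  | zero =>
    refine ⟨a, le_rfl, by simp, ?_⟩
    have h₁ := hs.dist_add_dist hz
    have h₂ := hstep a le_rfl (by simp)
    rw [pow_zero] at h₁
    rw [dist_comm z]
    have h₃ := dist_nonneg (x := z) (y := p (a + 1))
    simp only [Nat.cast_zero, zero_mul, zero_add]
    linarith
  | succ k ih =>
    have hpow : a + 2 ^ (k + 1) = a + 2 ^ k + 2 ^ k := by ring
    rw [hpow] at hs hstep ⊢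
    obtain ⟨A, hA⟩ := hX.1 (p a) (p (a + 2 ^ k))
    obtain ⟨B, hB⟩ := hX.1 (p (a + 2 ^ k)) (p (a + 2 ^ k + 2 ^ k))
    obtain ⟨u, hu, hzu⟩ := hX.2 _ _ _ s B A hs hB.symm hA.symm z hz
    have hfin : ∀ i, dist u (p i) ≤ k * δ + S → dist z (p i) ≤ (k + 1 : ℕ) * δ + S := by
      intro i hi
      have := dist_triangle z u (p i)
      push_cast
      linarith
    rcases hu with hu | hu
    · obtain ⟨i, h₁, h₂, h₃⟩ := ih (a + 2 ^ k)
        (fun i hi hi' => hstep i (by omega) (by omega)) hB hu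
      exact ⟨i, by omega, by omega, hfin i h₃⟩
    · obtain ⟨i, h₁, h₂, h₃⟩ := ih a (fun i hi hi' => hstep i (by omega) (by omega)) hA hu
      exact ⟨i, by omega, by omega, hfin i h₃⟩

/-- The midpoint of a discrete quasi-geodesic with `2 ^ (k + 1)` steps is at distance `O(k)` from
every geodesic joining its endpoints. -/
theorem DeltaHyperbolic.twiceGromovProduct_midpoint_le {X : Type} [MetricSpace X]
    {δ lam c D : ℝ} (hX : DeltaHyperbolic X δ) (hδ : 0 ≤ δ) (hlam : 1 ≤ lam) (hc : 0 ≤ c)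
    (k : ℕ) (hD : D = (k + 1) * δ + (lam + c) + 1) (p : ℕ → X)
    (hp : ∀ i j : ℕ, i ≤ j → j ≤ 2 ^ (k + 1) →
      lam⁻¹ * ((j : ℝ) - i) - c ≤ dist (p i) (p j) ∧
        dist (p i) (p j) ≤ lam * ((j : ℝ) - i) + c) :
    twiceGromovProduct (p 0) (p (2 ^ (k + 1))) (p (2 ^ k)) ≤
      2 * (D + (lam * (lam * (2 * D + c)) + c)) := by
  have hlam0 : 0 < lam := by linarith
  have hpow : 2 ^ k ≤ 2 ^ (k + 1) := Nat.pow_le_pow_right (by norm_num) (by omega)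
  obtain ⟨s, hs⟩ := hX.1 (p 0) (p (2 ^ (k + 1)))
  have hD0 : 0 ≤ D - 1 := by rw [hD]; nlinarith [(Nat.cast_nonneg k : (0 : ℝ) ≤ k)]
  obtain ⟨z, hz, ⟨_, ⟨i, hi, rfl⟩, hzi⟩, _, ⟨j, hj, rfl⟩, hzj⟩ :=
    hs.isPreconnected.exists_dist_le_of_cover (S := p '' Iic (2 ^ k))
      (T := p '' Icc (2 ^ k) (2 ^ (k + 1))) (D := D - 1)
      (fun z hz => by
        obtain ⟨i, -, hi, hd⟩ := hX.exists_dist_le_of_discrete_path (S := lam + c) p (k + 1) 0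
          (fun i _ hi => by
            have := (hp i (i + 1) (by omega) (by omega)).2
            push_cast at this
            linarith)
          (by simpa using hs) hz
        refine ⟨p i, ?_, by rw [hD]; push_cast at hd; linarith⟩
        rcases le_total i (2 ^ k) with h | h
        · exact Or.inl ⟨i, h, rfl⟩
        · exact Or.inr ⟨i, ⟨h, by omega⟩, rfl⟩)
      ⟨p 0, hs.left_mem, p 0, ⟨0, Nat.zero_le _, rfl⟩, by simpa using hD0⟩
      ⟨_, hs.right_mem, _, ⟨_, ⟨hpow, le_rfl⟩, rfl⟩, by simpa using hD0⟩
  rw [sub_add_cancel] at hzi hzj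
  have hi' : i ≤ 2 ^ k := hi
  have hij := (hp i j (hi'.trans hj.1) hj.2).1
  have hmid := (hp i (2 ^ k) hi' hpow).2
  have hdij := dist_triangle_left (p i) (p j) z
  have hgap : (j : ℝ) - i ≤ lam * (2 * D + c) := by
    have h : lam⁻¹ * ((j : ℝ) - i) ≤ 2 * D + c := by linarith
    rwa [inv_mul_le_iff₀ hlam0] at h
  have hj' : ((2 ^ k : ℕ) : ℝ) ≤ j := by exact_mod_cast hj.1
  have hmid' : dist (p i) (p (2 ^ k)) ≤ lam * (lam * (2 * D + c)) + c := by
    refine hmid.trans ?_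
    gcongr
    linarith
  have := twiceGromovProduct_le_of_mem (w := p (2 ^ k)) hs hz
  have := dist_triangle z (p i) (p (2 ^ k))
  linarith

/-- A broken geodesic with long pieces and small Gromov products at its vertices makes linear
progress. -/
theorem DeltaHyperbolic.le_dist_of_broken_geodesic {X : Type} [MetricSpace X] {δ K : ℝ}
    (hX : DeltaHyperbolic X δ) (hδ : 0 ≤ δ) (hK : 0 ≤ K) (x : ℕ → X) (m : ℕ)
    (hlong : ∀ n < m, K + (6 * δ + 4) + 1 ≤ dist (x n) (x (n + 1)))
    (hprod : ∀ n, n + 2 ≤ m → twiceGromovProduct (x n) (x (n + 2)) (x (n + 1)) ≤ K) :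
    (m : ℝ) ≤ dist (x 0) (x m) := by
  have hturn : ∀ n < m, twiceGromovProduct (x 0) (x (n + 1)) (x n) ≤ K + (6 * δ + 4) := by
    intro n
    induction n with
    | zero =>
      intro _
      simp only [twiceGromovProduct, dist_self, zero_add, dist_comm (x 1) (x 0), sub_self]
      linarith
    | succ n ih =>
      intro hn
      have h₁ := ih (by omega)
      have h₂ := hlong n (by omega)
      have h₃ := hprod n (by omega)
      have h₄ := hX.four_point hδ (x n) (x 0) (x (n + 2)) (x (n + 1))
      rcases h₄ with h₄ | h₄
      · unfold twiceGromovProduct at h₁ h₃ h₄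
        rw [dist_comm (x n) (x 0)] at h₄
        rw [dist_comm (x (n + 1)) (x n)] at h₁
        linarith
      · exact h₄.trans (by linarith)
  have hprogress : ∀ n ≤ m, (n : ℝ) ≤ dist (x 0) (x n) := by
    intro n
    induction n with
    | zero => simp
    | succ n ih =>
      intro hn
      have h₁ := ih (by omega)
      have h₂ := hlong n (by omega)
      have h₃ := hturn n (by omega)
      unfold twiceGromovProduct at h₃
      rw [dist_comm (x (n + 1)) (x n)] at h₃
      push_cast
      linarith
  exact hprogress m le_rfl

theorem exists_linear_le_two_pow (A B : ℝ) : ∃ k : ℕ, A * k + B ≤ 2 ^ k := by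
  have hsq : ∀ n : ℕ, 4 ≤ n → n ^ 2 ≤ 2 ^ n := by
    intro n hn
    induction n, hn using Nat.le_induction with
    | base => norm_num
    | succ n hn ih =>
      rw [pow_succ 2 n]
      nlinarith
  obtain ⟨k, hk⟩ := exists_nat_ge (|A| + |B| + 4)
  have hA := abs_nonneg A
  have hB := abs_nonneg B
  have h4 : (4 : ℝ) ≤ k := by linarith
  have hk2 : (k : ℝ) ^ 2 ≤ 2 ^ k := by exact_mod_cast hsq k (by exact_mod_cast h4)
  refine ⟨k, le_trans ?_ hk2⟩
  nlinarith [le_abs_self A, le_abs_self B]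

/-- a map from a geodesic space to a `δ`-hyperbolic geodesic space whose
restriction to every ball of radius `M ≥ M₁(δ,λ,c)` is a `(λ,c)`-quasi-isometric
embedding is a global `(λ',c')`-quasi-isometric embedding, with `λ', c'` depending
only on `δ, λ, c`. -/
theorem local_to_global_quasi_isometric_embedding
    (δ lam c : ℝ) (hδ : 0 ≤ δ) (hlam : 1 ≤ lam) (hc : 0 ≤ c) :
    ∃ M₁ lam' c' : ℝ, 0 ≤ M₁ ∧ 1 ≤ lam' ∧ 0 ≤ c' ∧
      ∀ (X Y : Type) [MetricSpace X] [MetricSpace Y],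
        DeltaHyperbolic X δ → GeodesicSpace Y →
        ∀ (M : ℝ) (q : Y → X), M₁ ≤ M →
          (∀ y : Y, ∀ y₁ ∈ Metric.closedBall y M, ∀ y₂ ∈ Metric.closedBall y M,
            lam⁻¹ * dist y₁ y₂ - c ≤ dist (q y₁) (q y₂) ∧
            dist (q y₁) (q y₂) ≤ lam * dist y₁ y₂ + c) →
          QIEmbedding q lam' c' := by
  have hlam0 : 0 < lam := by linarith
  obtain ⟨k, hk⟩ : ∃ k : ℕ, ∀ D : ℝ, D = (k + 1) * δ + (lam + c) + 1 →
      2 * (D + (lam * (lam * (2 * D + c)) + c)) + (6 * δ + 4) + 1 ≤ lam⁻¹ * 2 ^ k - c := by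
    obtain ⟨k, hk⟩ := exists_linear_le_two_pow (lam * (2 * (δ + lam * (lam * (2 * δ)))))
      (lam * (2 * ((δ + (lam + c) + 1) + (lam * (lam * (2 * (δ + (lam + c) + 1) + c)) + c)) +
        (6 * δ + 4) + 1 + c))
    refine ⟨k, ?_⟩
    rintro D rfl
    rw [le_sub_iff_add_le, le_inv_mul_iff₀ hlam0]
    refine le_trans (le_of_eq ?_) hk
    ring
  obtain ⟨D, hD⟩ : ∃ D : ℝ, D = (k + 1) * δ + (lam + c) + 1 := ⟨_, rfl⟩
  replace hk := hk D hD
  have hD0 : 0 ≤ D := by rw [hD]; positivity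
  obtain ⟨N, hN⟩ : ∃ N : ℝ, N = 2 ^ k := ⟨_, rfl⟩
  rw [← hN] at hk
  have hN1 : 1 ≤ N := by rw [hN]; exact one_le_pow₀ (by norm_num)
  have hlamN : 0 ≤ lam * N := by positivity
  refine ⟨2 * N, lam + c + N, 1 + lam * N + c, by linarith, by linarith, by linarith, ?_⟩
  intro X Y _ _ hX hY M q hM hq y₁ y₂
  obtain ⟨-, γ, h0, h1, hγ, -⟩ := hY y₁ y₂
  obtain ⟨L, hL⟩ : ∃ L, L = dist y₁ y₂ := ⟨_, rfl⟩
  rw [← hL] at h1 hγ ⊢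
  have hL0 : 0 ≤ L := hL ▸ dist_nonneg
  have hf : ∀ t t' : ℝ, 0 ≤ t → t ≤ t' → t' ≤ L → t' - t ≤ 2 * N →
      lam⁻¹ * (t' - t) - c ≤ dist (q (γ t)) (q (γ t')) ∧
        dist (q (γ t)) (q (γ t')) ≤ lam * (t' - t) + c := by
    intro t t' ht htt' ht' hlen
    have hd := hγ t ⟨ht, by linarith⟩ t' ⟨by linarith, ht'⟩
    rw [abs_sub_comm, abs_of_nonneg (by linarith)] at hd
    rw [← hd]
    refine hq (γ t) (γ t) (Metric.mem_closedBall_self (by linarith)) (γ t') ?_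
    rw [Metric.mem_closedBall, dist_comm, hd]
    linarith
  obtain ⟨m, hm⟩ : ∃ m, m = ⌊L / N⌋₊ := ⟨_, rfl⟩
  have hmL : m * N ≤ L := by
    rw [← le_div_iff₀ (by linarith), hm]
    exact Nat.floor_le (by positivity)
  have hLm : L ≤ (m + 1) * N := by
    rw [← div_le_iff₀ (by linarith), hm]
    exact (Nat.lt_floor_add_one _).le
  have hle : ∀ n : ℕ, n ≤ m → n * N ≤ L := fun n hn =>
    le_trans (by gcongr) hmL
  have hlast := (hf (m * N) L (by positivity) hmL le_rfl (by linarith)).2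
  rw [h1] at hlast
  have hlast' : dist (q (γ (m * N))) (q y₂) ≤ lam * N + c :=
    hlast.trans (by gcongr; linarith)
  have hstep : ∀ n : ℕ, n < m →
      lam⁻¹ * N - c ≤ dist (q (γ (n * N))) (q (γ ((n + 1 : ℕ) * N))) ∧
        dist (q (γ (n * N))) (q (γ ((n + 1 : ℕ) * N))) ≤ lam * N + c := by
    intro n hn
    have e : ((n + 1 : ℕ) : ℝ) * N - n * N = N := by push_cast; ring
    have := hf (n * N) ((n + 1 : ℕ) * N) (by positivity) (by linarith) (hle _ hn) (by linarith)
    rwa [e] at this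
  constructor
  · have hlin := hX.le_dist_of_broken_geodesic hδ
      (K := 2 * (D + (lam * (lam * (2 * D + c)) + c))) (by positivity)
      (fun n : ℕ => q (γ (n * N))) m
      (fun n hn => hk.trans (hstep n hn).1)
      (fun n hn => by
        have hcast : ((2 ^ (k + 1) : ℕ) : ℝ) = 2 * N := by rw [hN]; push_cast; ring
        have h := hX.twiceGromovProduct_midpoint_le hδ hlam hc k hD
          (fun i : ℕ => q (γ (n * N + i)))
          (fun i j hij hj => by
            have hij' : (i : ℝ) ≤ j := by exact_mod_cast hij
            have hi0 : (0 : ℝ) ≤ i := Nat.cast_nonneg i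
            have hj' : (j : ℝ) ≤ 2 * N := by rw [← hcast]; exact_mod_cast hj
            have hn2 := hle _ hn
            push_cast at hn2
            have := hf (n * N + i) (n * N + j) (by positivity) (by linarith) (by linarith)
              (by linarith)
            rwa [add_sub_add_left_eq_sub] at this)
        have e₁ : ((n + 1 : ℕ) : ℝ) * N = n * N + (2 ^ k : ℕ) := by
          rw [hN]; push_cast; ring
        have e₂ : ((n + 2 : ℕ) : ℝ) * N = n * N + (2 ^ (k + 1) : ℕ) := by
          rw [hcast]; push_cast; ring
        simp only [e₁, e₂]
        simpa only [Nat.cast_zero, add_zero] using h)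
    simp only [Nat.cast_zero, zero_mul, h0] at hlin
    have hinv : (lam + c + N)⁻¹ * L ≤ m + 1 := by
      rw [inv_mul_le_iff₀ (by linarith)]
      refine hLm.trans ?_
      rw [mul_comm]
      gcongr
      linarith
    rw [dist_comm (q (γ (m * N))) (q y₂)] at hlast'
    have := dist_triangle (q y₁) (q y₂) (q (γ (m * N)))
    linarith
  · have hup : ∀ n : ℕ, n ≤ m → dist (q y₁) (q (γ (n * N))) ≤ n * (lam * N + c) := by
      intro n
      induction n with
      | zero => simp [h0]
      | succ n ih =>
        intro hn
        have h₁ := ih (by omega)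
        have h₂ := (hstep n hn).2
        have h₃ := dist_triangle (q y₁) (q (γ (n * N))) (q (γ ((n + 1 : ℕ) * N)))
        have e : ((n + 1 : ℕ) : ℝ) * (lam * N + c) = n * (lam * N + c) + (lam * N + c) := by
          push_cast; ring
        linarith
    have h₁ := hup m le_rfl
    have h₂ := dist_triangle (q y₁) (q (γ (m * N))) (q y₂)
    have h₃ : (m : ℝ) * (lam * N + c) ≤ (lam + c) * L := by
      calc (m : ℝ) * (lam * N + c) ≤ m * (lam * N + c * N) := by
            gcongr
            nlinarith
        _ = (lam + c) * (m * N) := by ring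
        _ ≤ (lam + c) * L := by gcongr
    have h₄ : 0 ≤ N * L := by positivity
    nlinarith
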